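/- arXiv:1211.6563 — 6 statements merged into one kernel-verified Lean document; each statement's English description precedes it below -/
import Mathlib

section
/- For every natural number n, Σ_{i=0}^{n} Σ_{j=0}^{n} C(n,i)·C(n,j)·C(i,j)·C(n−j,i) = Σ_{k=0}^{n} C(n,k)³. -/
open Finset

theorem trinomial_swap (n i j : ℕ) (hi : i ≤ n) (hj : j ≤ n) :
    n.choose j * (n - j).choose i = n.choose i * (n - i).choose j := by
  by_cases h : i + j ≤ n
  · have h1 := Nat.choose_mul (n := n) (k := i + j) (s := i) (by omega)
    have h2 := Nat.choose_mul (n := n) (k := i + j) (s := j) (by omega)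
    rw [Nat.add_sub_cancel_left] at h1
    rw [Nat.add_sub_cancel] at h2
    rw [← h1, ← h2, Nat.choose_symm_add]
  · rw [Nat.choose_eq_zero_of_lt (show n - j < i by omega),
      Nat.choose_eq_zero_of_lt (show n - i < j by omega), mul_zero, mul_zero]

theorem vandermonde_range (n i : ℕ) (hi : i ≤ n) :
    ∑ j ∈ Finset.range (n + 1), i.choose j * (n - i).choose j = n.choose i := by
  have h := Nat.add_choose_eq (n - i) i i
  rw [Nat.sub_add_cancel hi, Finset.Nat.sum_antidiagonal_eq_sum_range_succ_mk] at h
  rw [h]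
  symm
  apply Finset.sum_subset_zero_on_sdiff
  · intro x hx
    simp only [Finset.mem_range] at *
    omega
  · intro x hx
    simp only [Finset.mem_sdiff, Finset.mem_range] at hx
    rw [Nat.choose_eq_zero_of_lt (show i < x by omega), zero_mul]
  · intro x hx
    simp only [Finset.mem_range] at hx
    simp only
    rw [Nat.choose_symm (show x ≤ i by omega), mul_comm]

theorem double_sum_binomials_eq_sum_cubes (n : ℕ) :
    (∑ i ∈ Finset.range (n + 1), ∑ j ∈ Finset.range (n + 1),
        n.choose i * n.choose j * i.choose j * (n - j).choose i) =
      ∑ k ∈ Finset.range (n + 1), (n.choose k) ^ 3 := by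
  apply Finset.sum_congr rfl
  intro i hi
  have hi' : i ≤ n := by simpa [Nat.lt_succ_iff] using hi
  have key : ∀ j ∈ Finset.range (n + 1),
      n.choose i * n.choose j * i.choose j * (n - j).choose i =
        n.choose i ^ 2 * (i.choose j * (n - i).choose j) := by
    intro j hj
    have hj' : j ≤ n := by simpa [Nat.lt_succ_iff] using hj
    have h := trinomial_swap n i j hi' hj'
    calc _ = n.choose i * i.choose j * (n.choose j * (n - j).choose i) := by ring
      _ = _ := by rw [h]; ring
  rw [Finset.sum_congr rfl key, ← Finset.mul_sum, vandermonde_range n i hi']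
  ring
end

section
/- For every natural number n, Σ_{i=0}^{n} Σ_{j=0}^{n} Σ_{k=0}^{n} C(n,i)·C(n,j)·C(n−j,i)·C(i,k)·C(n−i,j+k) = Σ_{k=0}^{n} C(n,k)²·C(n+k,n). -/
open Finset

lemma vand_aux (n i j : ℕ) (hi : i ≤ n) :
    ∑ k ∈ Finset.range (n + 1), i.choose k * (n - i).choose (j + k) = n.choose (i + j) := by
  have h1 : ∑ k ∈ Finset.range (n + 1), i.choose k * (n - i).choose (j + k)
      = ∑ k ∈ Finset.range (i + 1), i.choose k * (n - i).choose (j + k) := by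
    symm
    apply Finset.sum_subset
    · intro x hx
      simp only [Finset.mem_range] at *
      omega
    · intro x _ hx
      simp only [Finset.mem_range] at hx
      rw [Nat.choose_eq_zero_of_lt (by omega : i < x), zero_mul]
  have h2 : n.choose (i + j) = ∑ k ∈ Finset.range (i + j + 1),
      i.choose k * (n - i).choose (i + j - k) := by
    have h := Nat.add_choose_eq i (n - i) (i + j)
    rw [Nat.add_sub_cancel' hi, Finset.Nat.sum_antidiagonal_eq_sum_range_succ
      (fun a b => i.choose a * (n - i).choose b)] at h
    exact h
  have h3 : ∑ k ∈ Finset.range (i + j + 1), i.choose k * (n - i).choose (i + j - k)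
      = ∑ k ∈ Finset.range (i + 1), i.choose k * (n - i).choose (i + j - k) := by
    symm
    apply Finset.sum_subset
    · intro x hx
      simp only [Finset.mem_range] at *
      omega
    · intro x _ hx
      simp only [Finset.mem_range] at hx
      rw [Nat.choose_eq_zero_of_lt (by omega : i < x), zero_mul]
  rw [h1, h2, h3, ← Finset.sum_range_reflect]
  apply Finset.sum_congr rfl
  intro k hk
  have hk' : k ≤ i := by simpa [Nat.lt_succ_iff] using hk
  rw [show i + 1 - 1 - k = i - k by omega, Nat.choose_symm hk',
    show j + (i - k) = i + j - k by omega]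

theorem triple_sum_binomials_eq_sum_squares_mul (n : ℕ) :
    (∑ i ∈ Finset.range (n + 1), ∑ j ∈ Finset.range (n + 1), ∑ k ∈ Finset.range (n + 1),
        n.choose i * n.choose j * (n - j).choose i * i.choose k * (n - i).choose (j + k)) =
      ∑ k ∈ Finset.range (n + 1), (n.choose k) ^ 2 * (n + k).choose n := by
  have h1 : ∀ i ∈ Finset.range (n + 1),
      (∑ j ∈ Finset.range (n + 1), ∑ k ∈ Finset.range (n + 1),
        n.choose i * n.choose j * (n - j).choose i * i.choose k * (n - i).choose (j + k)) =
      ∑ j ∈ Finset.range (n + 1 - i),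
        n.choose i * n.choose j * (n - j).choose i * n.choose (i + j) := by
    intro i hi
    have hi' : i ≤ n := by simpa [Nat.lt_succ_iff] using hi
    have : ∀ j, ∑ k ∈ Finset.range (n + 1),
        n.choose i * n.choose j * (n - j).choose i * i.choose k * (n - i).choose (j + k)
        = n.choose i * n.choose j * (n - j).choose i * n.choose (i + j) := by
      intro j
      rw [← vand_aux n i j hi', Finset.mul_sum]
      exact Finset.sum_congr rfl fun k _ => by ring
    simp only [this]
    symm
    apply Finset.sum_subset
    · intro x hx
      simp only [Finset.mem_range] at *
      omega
    · intro x _ hx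
      simp only [Finset.mem_range] at hx
      rw [Nat.choose_eq_zero_of_lt (by omega : n < i + x), mul_zero]
  rw [Finset.sum_congr rfl h1, ← Finset.sum_range_diag_flip (n + 1)
    (fun i j => n.choose i * n.choose j * (n - j).choose i * n.choose (i + j))]
  apply Finset.sum_congr rfl
  intro m hm
  have hm' : m ≤ n := by simpa [Nat.lt_succ_iff] using hm
  have hv : (n + m).choose n = ∑ k ∈ Finset.range (m + 1), n.choose k * m.choose (m - k) := by
    have h := Nat.add_choose_eq n m m
    rw [Finset.Nat.sum_antidiagonal_eq_sum_range_succ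
      (fun a b => n.choose a * m.choose b)] at h
    rw [Nat.choose_symm_add, h]
  rw [hv, Finset.mul_sum]
  apply Finset.sum_congr rfl
  intro i hi
  have hi' : i ≤ m := by simpa [Nat.lt_succ_iff] using hi
  have h := Nat.choose_mul (n := n) (k := m) (s := m - i) (by omega)
  rw [show m - (m - i) = i by omega] at h
  rw [show i + (m - i) = m by omega]
  calc _ = n.choose i * n.choose m * (n.choose (m - i) * (n - (m - i)).choose i) := by ring
    _ = _ := by rw [← h]; ring
end

section
/- For every real number b and every natural number n, T_n(b) = (1/π) · ∫_{0}^{π} (b − 2·cos θ)^n dθ, where T_n(b) = Σ_{k=0}^{⌊n/2⌋} C(n,k)·C(n−k,k)·b^{n−2k}. -/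
open Finset Real

/-- The polynomial `T_n(b) = T_n(b, 1) = ∑_{k=0}^{⌊n/2⌋} C(n,k) C(n−k,k) b^{n−2k}`. -/
noncomputable def T (n : ℕ) (b : ℝ) : ℝ :=
  ∑ k ∈ Finset.range (n / 2 + 1),
    (n.choose k : ℝ) * ((n - k).choose k : ℝ) * b ^ (n - 2 * k)

theorem aux_J_rec (m : ℕ) : (∫ x in (0:ℝ)..π, Real.cos x ^ (m+2)) =
    ((m:ℝ)+1)/((m:ℝ)+2) * ∫ x in (0:ℝ)..π, Real.cos x ^ m := by
  rw [integral_cos_pow]; simp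

theorem aux_J_even (k : ℕ) : (4:ℝ)^k * (∫ x in (0:ℝ)..π, Real.cos x ^ (2*k)) =
    (k.centralBinom : ℝ) * π := by
  induction k with
  | zero => simp
  | succ k ih =>
    have h := Nat.succ_mul_centralBinom_succ k
    have h' : ((k:ℝ)+1) * ((k+1).centralBinom : ℝ) = 2*(2*k+1) * (k.centralBinom : ℝ) := by
      exact_mod_cast h
    rw [show 2*(k+1) = 2*k+2 by ring, aux_J_rec]
    have hk : (k:ℝ)+1 ≠ 0 := by positivity
    apply mul_left_cancel₀ hk
    rw [← mul_assoc ((k:ℝ)+1) ((k+1).centralBinom : ℝ), h', mul_assoc, ← ih]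
    push_cast
    field_simp
    ring

theorem aux_J_odd (k : ℕ) : (∫ x in (0:ℝ)..π, Real.cos x ^ (2*k+1)) = 0 := by
  induction k with
  | zero => simp
  | succ k ih =>
    rw [show 2*(k+1)+1 = (2*k+1)+2 by ring, aux_J_rec, ih, mul_zero]

theorem aux_sum (n : ℕ) (f : ℕ → ℝ) (hf : ∀ k, f (2*k+1) = 0) :
    ∑ m ∈ Finset.range (n+1), f m = ∑ k ∈ Finset.range (n/2+1), f (2*k) := by
  rw [← Finset.sum_image (s := Finset.range (n/2+1)) (g := fun k => 2*k) (f := f)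
    (by intro a _ b _ h; simpa using h)]
  symm
  apply Finset.sum_subset
  · intro m hm
    simp only [Finset.mem_image, Finset.mem_range] at hm ⊢
    omega
  · intro m hm hm'
    obtain ⟨k, rfl | rfl⟩ := m.even_or_odd'
    · exfalso
      apply hm'
      simp only [Finset.mem_image, Finset.mem_range] at hm ⊢
      exact ⟨k, by omega, rfl⟩
    · exact hf k

theorem T_eq_integral (b : ℝ) (n : ℕ) :
    T n b = (1 / π) * ∫ θ in (0 : ℝ)..π, (b - 2 * Real.cos θ) ^ n := by
  have h1 : (∫ θ in (0 : ℝ)..π, (b - 2 * Real.cos θ) ^ n) =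
      ∑ m ∈ Finset.range (n+1), ((-2)^m * b^(n-m) * (n.choose m : ℝ)) *
        ∫ θ in (0 : ℝ)..π, Real.cos θ ^ m := by
    have : ∀ θ : ℝ, (b - 2 * Real.cos θ) ^ n = ∑ m ∈ Finset.range (n+1),
        ((-2)^m * b^(n-m) * (n.choose m : ℝ)) * Real.cos θ ^ m := by
      intro θ
      rw [show b - 2 * Real.cos θ = (-2) * Real.cos θ + b by ring, add_pow]
      refine Finset.sum_congr rfl fun m _ => ?_
      rw [mul_pow]; ring
    simp_rw [this]
    rw [intervalIntegral.integral_finsetSum]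
    · simp_rw [intervalIntegral.integral_const_mul]
    · intro m _
      exact Continuous.intervalIntegrable (by fun_prop) _ _
  rw [h1, aux_sum _ _ (by intro k; rw [aux_J_odd, mul_zero]), T, Finset.mul_sum]
  refine Finset.sum_congr rfl fun k hk => ?_
  have hk' : 2*k ≤ n := by
    have := Finset.mem_range.1 hk
    omega
  have hc : n.choose (2*k) * k.centralBinom = n.choose k * (n-k).choose k := by
    have := Nat.choose_mul (n := n) (show k ≤ 2*k by omega)
    rwa [show 2*k-k = k by omega] at this
  have hc' : (n.choose (2*k) : ℝ) * k.centralBinom = n.choose k * (n-k).choose k := by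
    exact_mod_cast hc
  have hJ := aux_J_even k
  rw [← hc', show ((-2:ℝ))^(2*k) = 4^k by rw [pow_mul]; norm_num]
  have hp := Real.pi_ne_zero
  calc _ = 1/π * (b^(n-2*k) * n.choose (2*k) * (k.centralBinom * π)) := by field_simp
    _ = _ := by rw [← hJ]; ring
end

section
/- In ℚ, for every natural number n, C(2n,n) · Σ_{k=0}^{n} C(n,k)·C(2k,k)²·C(2n−2k,n−k)²·(1 + k·(−5·H_k + 5·H_{n−k} + 4·H_{2k} − 4·H_{2n−2k})) = C(2n,n) · Σ_{k=0}^{n} 4^{n−k}·C(2k,k)²·C(2n−2k,n−k). -/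
open Finset

namespace HB

def t (n k : ℕ) : ℚ :=
  (n.choose k : ℚ) * ((2 * k).choose k : ℚ) ^ 2 * ((2 * n - 2 * k).choose (n - k) : ℚ) ^ 2

def h (n k : ℕ) : ℚ :=
  -5 * harmonic k + 5 * harmonic (n - k) + 4 * harmonic (2 * k) - 4 * harmonic (2 * n - 2 * k)

def s (n k : ℕ) : ℚ :=
  if k ≤ n then
    (4 : ℚ) ^ (n - k) * ((2 * k).choose k : ℚ) ^ 2 * ((2 * n - 2 * k).choose (n - k) : ℚ)
  else 0

lemma cb (j : ℕ) : ((2 * (j + 1)).choose (j + 1) : ℚ)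
    = 2 * (2 * j + 1) / (j + 1) * ((2 * j).choose j : ℚ) := by
  have h1 := Nat.succ_mul_centralBinom_succ j
  simp only [Nat.centralBinom] at h1
  have h2 : ((j : ℚ) + 1) * ((2 * (j + 1)).choose (j + 1) : ℚ)
      = 2 * (2 * j + 1) * ((2 * j).choose j : ℚ) := by exact_mod_cast h1
  have : (j : ℚ) + 1 ≠ 0 := by positivity
  field_simp
  linarith

lemma h2 (j : ℕ) : harmonic (2 * (j + 1)) = harmonic (2 * j) + 1 / (2 * j + 1) + 1 / (2 * j + 2) := by
  rw [show 2 * (j + 1) = 2 * j + 1 + 1 by ring, harmonic_succ, harmonic_succ]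
  push_cast
  ring

lemma h1 (j : ℕ) : harmonic (j + 1) = harmonic j + 1 / (j + 1) := by
  rw [harmonic_succ]
  push_cast
  ring

lemma t_add (k d : ℕ) : t (k + d) k =
    ((k + d).choose k : ℚ) * ((2 * k).choose k : ℚ) ^ 2 * ((2 * d).choose d : ℚ) ^ 2 := by
  unfold t
  rw [show 2 * (k + d) - 2 * k = 2 * d by omega, show k + d - k = d by omega]

lemma h_add (k d : ℕ) : h (k + d) k =
    -5 * harmonic k + 5 * harmonic d + 4 * harmonic (2 * k) - 4 * harmonic (2 * d) := by
  unfold h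
  rw [show 2 * (k + d) - 2 * k = 2 * d by omega, show k + d - k = d by omega]

lemma s_add (k d : ℕ) : s (k + d) k =
    (4 : ℚ) ^ d * ((2 * k).choose k : ℚ) ^ 2 * ((2 * d).choose d : ℚ) := by
  unfold s
  rw [if_pos (by omega), show 2 * (k + d) - 2 * k = 2 * d by omega, show k + d - k = d by omega]

lemma t_zero {n k : ℕ} (hk : n < k) : t n k = 0 := by
  unfold t
  rw [Nat.choose_eq_zero_of_lt hk]
  simp

lemma s_zero {n k : ℕ} (hk : n < k) : s n k = 0 := by
  unfold s
  rw [if_neg (by omega)]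

lemma odd_ne (a b : ℕ) : (2 * a - 2 * b + 1 : ℚ) ≠ 0 := by
  intro hh
  have : (2 * a - 2 * b + 1 : ℤ) = 0 := by exact_mod_cast hh
  omega

lemma ch1 (k d : ℕ) : ((k + (d + 1)).choose k : ℚ) = (k + d + 1) / (d + 1) * ((k + d).choose k : ℚ) := by
  have h1 := Nat.choose_mul_succ_eq (k + d) k
  rw [show k + d + 1 - k = d + 1 by omega] at h1
  have h2 : ((k + d).choose k : ℚ) * (k + d + 1) = ((k + (d + 1)).choose k : ℚ) * (d + 1) := by
    exact_mod_cast h1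
  have : (d : ℚ) + 1 ≠ 0 := by positivity
  field_simp
  linarith

lemma ch2 (k d : ℕ) : ((k + 1 + d).choose (k + 1) : ℚ)
    = (d + 1) / (k + 1) * ((k + (d + 1)).choose k : ℚ) := by
  have h1 := Nat.choose_succ_right_eq (k + (d + 1)) k
  rw [show k + (d + 1) - k = d + 1 by omega] at h1
  have h2 : ((k + (d + 1)).choose (k + 1) : ℚ) * (k + 1) = ((k + (d + 1)).choose k : ℚ) * (d + 1) := by
    exact_mod_cast h1
  rw [show k + 1 + d = k + (d + 1) by ring]
  have : (k : ℚ) + 1 ≠ 0 := by positivity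
  field_simp
  linarith

lemma T1 (n k : ℕ) : t n k =
    t (n + 1) k * ((n + 1 - k) ^ 3 / (4 * (n + 1) * (2 * n - 2 * k + 1) ^ 2)) := by
  rcases lt_or_ge n k with hk | hk
  · rw [t_zero hk]
    rcases eq_or_lt_of_le (Nat.succ_le_of_lt hk) with e | e
    · subst e
      push_cast
      simp
    · rw [t_zero e]
      simp
  · obtain ⟨d, rfl⟩ := Nat.exists_eq_add_of_le hk
    rw [add_assoc, t_add, t_add, ch1, cb]
    have e1 : (d : ℚ) + 1 ≠ 0 := by positivity
    have e2 : (k : ℚ) + d + 1 ≠ 0 := by positivity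
    have e3 : 2 * (d : ℚ) + 1 ≠ 0 := by positivity
    push_cast
    rw [show (2 * ((k : ℚ) + d) - 2 * k + 1) = 2 * d + 1 by ring,
      show ((k : ℚ) + d + 1 - k) = d + 1 by ring]
    field_simp
    ring

lemma T1h (n k : ℕ) : t n k * h n k =
    t (n + 1) k * h (n + 1) k * ((n + 1 - k) ^ 3 / (4 * (n + 1) * (2 * n - 2 * k + 1) ^ 2))
    + t (n + 1) k * ((-3 * (n + 1 - k) ^ 2 + 4 * (n + 1 - k) ^ 3 / (2 * n - 2 * k + 1))
      / (4 * (n + 1) * (2 * n - 2 * k + 1) ^ 2)) := by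
  rcases lt_or_ge n k with hk | hk
  · rw [t_zero hk]
    rcases eq_or_lt_of_le (Nat.succ_le_of_lt hk) with e | e
    · subst e
      push_cast
      simp
    · rw [t_zero e]
      simp
  · obtain ⟨d, rfl⟩ := Nat.exists_eq_add_of_le hk
    rw [add_assoc, t_add, t_add, h_add, h_add, ch1, cb, h1, h2]
    have e1 : (d : ℚ) + 1 ≠ 0 := by positivity
    have e2 : (k : ℚ) + d + 1 ≠ 0 := by positivity
    have e3 : 2 * (d : ℚ) + 1 ≠ 0 := by positivity
    push_cast
    rw [show (2 * ((k : ℚ) + d) - 2 * k + 1) = 2 * d + 1 by ring,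
      show ((k : ℚ) + d + 1 - k) = d + 1 by ring,
      show (2 * (d : ℚ) + 2) = 2 * (d + 1) by ring]
    field_simp
    ring

lemma S1 (n k : ℕ) : s n k =
    s (n + 1) k * ((n + 1 - k) / (8 * (2 * n - 2 * k + 1))) := by
  rcases lt_or_ge n k with hk | hk
  · rw [s_zero hk]
    rcases eq_or_lt_of_le (Nat.succ_le_of_lt hk) with e | e
    · subst e
      push_cast
      simp
    · rw [s_zero e]
      simp
  · obtain ⟨d, rfl⟩ := Nat.exists_eq_add_of_le hk
    rw [add_assoc, s_add, s_add, cb]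
    have e1 : (d : ℚ) + 1 ≠ 0 := by positivity
    have e3 : 2 * (d : ℚ) + 1 ≠ 0 := by positivity
    push_cast
    rw [show (2 * ((k : ℚ) + d) - 2 * k + 1) = 2 * d + 1 by ring,
      show ((k : ℚ) + d + 1 - k) = d + 1 by ring]
    field_simp
    ring

lemma T2 (n k : ℕ) (hk : k ≤ n) : t n (k + 1) =
    t n k * ((n - k) ^ 3 * (2 * k + 1) ^ 2 / ((k + 1) ^ 3 * (2 * n - 2 * k - 1) ^ 2)) := by
  obtain ⟨d, rfl⟩ := Nat.exists_eq_add_of_le hk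
  rcases d with _ | d
  · rw [t_zero (by omega)]
    simp
  · rw [t_add, show k + (d + 1) = k + 1 + d by ring, t_add, ch2, cb, cb,
      show k + 1 + d = k + (d + 1) by ring]
    have e1 : (d : ℚ) + 1 ≠ 0 := by positivity
    have e2 : (k : ℚ) + 1 ≠ 0 := by positivity
    have e3 : 2 * (d : ℚ) + 1 ≠ 0 := by positivity
    push_cast
    rw [show (2 * ((k : ℚ) + (d + 1)) - 2 * k - 1) = 2 * d + 1 by ring,
      show ((k : ℚ) + (d + 1) - k) = d + 1 by ring]
    field_simp
    try ring

lemma T2h (n k : ℕ) (hk : k ≤ n) : t n (k + 1) * h n (k + 1) =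
    t n k * h n k * ((n - k) ^ 3 * (2 * k + 1) ^ 2 / ((k + 1) ^ 3 * (2 * n - 2 * k - 1) ^ 2))
    + t n k * ((-3 * (n - k) ^ 2 * (2 * k + 1) ^ 2 + 4 * (2 * k + 1) * (n - k) ^ 3
        - 3 * (n - k) ^ 3 * (2 * k + 1) ^ 2 / (k + 1)
        + 4 * (n - k) ^ 3 * (2 * k + 1) ^ 2 / (2 * n - 2 * k - 1))
      / ((k + 1) ^ 3 * (2 * n - 2 * k - 1) ^ 2)) := by
  obtain ⟨d, rfl⟩ := Nat.exists_eq_add_of_le hk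
  rcases d with _ | d
  · rw [t_zero (by omega)]
    simp
  · rw [t_add, h_add, show k + (d + 1) = k + 1 + d by ring, t_add, h_add, ch2, cb, cb,
      show k + 1 + d = k + (d + 1) by ring, h1, h1, h2, h2]
    have e1 : (d : ℚ) + 1 ≠ 0 := by positivity
    have e2 : (k : ℚ) + 1 ≠ 0 := by positivity
    have e3 : 2 * (d : ℚ) + 1 ≠ 0 := by positivity
    have e4 : 2 * (k : ℚ) + 1 ≠ 0 := by positivity
    push_cast
    rw [show (2 * ((k : ℚ) + (d + 1)) - 2 * k - 1) = 2 * d + 1 by ring,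
      show ((k : ℚ) + (d + 1) - k) = d + 1 by ring,
      show (2 * (d : ℚ) + 2) = 2 * (d + 1) by ring,
      show (2 * (k : ℚ) + 2) = 2 * (k + 1) by ring]
    field_simp
    ring

lemma S2 (n k : ℕ) (hk : k ≤ n) : s n (k + 1) =
    s n k * ((n - k) * (2 * k + 1) ^ 2 / (2 * (k + 1) ^ 2 * (2 * n - 2 * k - 1))) := by
  obtain ⟨d, rfl⟩ := Nat.exists_eq_add_of_le hk
  rcases d with _ | d
  · rw [s_zero (by omega)]
    simp
  · rw [s_add, show k + (d + 1) = k + 1 + d by ring, s_add, cb, cb]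
    have e1 : (d : ℚ) + 1 ≠ 0 := by positivity
    have e2 : (k : ℚ) + 1 ≠ 0 := by positivity
    have e3 : 2 * (d : ℚ) + 1 ≠ 0 := by positivity
    push_cast
    rw [show (2 * ((k : ℚ) + 1 + d) - 2 * k - 1) = 2 * d + 1 by ring,
      show ((k : ℚ) + 1 + d - k) = d + 1 by ring]
    field_simp
    ring

/-- The certificate for the right-hand sum. -/
def GS (n k : ℕ) : ℚ := s (n + 2) k * (k ^ 2 / (2 * n - 2 * k + 3))

lemma S_cert (n k : ℕ) (hk : k ≤ n + 2) :
    ((n : ℚ) + 2) ^ 2 * s (n + 2) k - (32 * (n + 1) * (n + 2) + 12) * s (n + 1) k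
      + 256 * (n + 1) ^ 2 * s n k = GS n (k + 1) - GS n k := by
  unfold GS
  rw [S2 (n + 2) k hk, S1 n k, S1 (n + 1) k]
  have q2 := odd_ne n k
  have q := odd_ne (n + 1) k
  have e2 : (k : ℚ) + 1 ≠ 0 := by positivity
  push_cast at q ⊢
  rw [show 2 * ((n : ℚ) + 1) - 2 * k + 1 = 2 * n - 2 * k + 3 by ring] at *
  rw [show 2 * ((n : ℚ) + 2) - 2 * k - 1 = 2 * n - 2 * k + 3 by ring,
    show 2 * (n : ℚ) - 2 * (k + 1) + 3 = 2 * n - 2 * k + 1 by ring]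
  generalize s (n + 1 + 1) k = u
  generalize (n : ℚ) = x at *
  generalize (k : ℚ) = y at *
  obtain ⟨r0, hr0⟩ : ∃ r, r = 2 * x - 2 * y + 1 := ⟨_, rfl⟩
  obtain ⟨r1, hr1⟩ : ∃ r, r = 2 * x - 2 * y + 3 := ⟨_, rfl⟩
  rw [← hr0] at q2 ⊢
  rw [← hr1] at q ⊢
  field_simp
  rw [hr0, hr1]
  ring

def P (n k : ℚ) : ℚ := 64 * n ^ 4 + 320 * n ^ 3 + 544 * n ^ 2 + 352 * n + 64
  - (128 * n ^ 3 + 448 * n ^ 2 + 464 * n + 144) * k + 64 * (n + 1) ^ 2 * k ^ 2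

def Pder (n k : ℚ) : ℚ :=
  - (128 * n ^ 3 + 448 * n ^ 2 + 464 * n + 144) + 128 * (n + 1) ^ 2 * k

/-- The derivative of the certificate for the left-hand sum. -/
def GT (n k : ℕ) : ℚ :=
  t (n + 2) k * h (n + 2) k *
    (k ^ 3 * P n k / (16 * (n + 1) * (n + 2) * (2 * n - 2 * k + 3) ^ 2))
  + t (n + 2) k * ((3 * k ^ 2 * P n k + k ^ 3 * Pder n k + 4 * k ^ 3 * P n k / (2 * n - 2 * k + 3))
      / (16 * (n + 1) * (n + 2) * (2 * n - 2 * k + 3) ^ 2))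

def D (n k : ℕ) : ℚ := (n - 2 * k) * (t n k * h n k) - 2 * t n k

set_option maxRecDepth 10000 in
set_option maxHeartbeats 2000000 in
lemma T_cert (n k : ℕ) (hk : k ≤ n + 2) :
    ((n : ℚ) + 2) ^ 2 * D (n + 2) k - (32 * (n + 1) * (n + 2) + 12) * D (n + 1) k
      + 256 * (n + 1) ^ 2 * D n k = GT n (k + 1) - GT n k := by
  unfold GT D
  rw [T2h (n + 2) k hk, T2 (n + 2) k hk, T1h n k, T1 n k, T1h (n + 1) k, T1 (n + 1) k]
  have q2 := odd_ne n k
  have q := odd_ne (n + 1) k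
  have e2 : (k : ℚ) + 1 ≠ 0 := by positivity
  have e3 : (n : ℚ) + 1 ≠ 0 := by positivity
  have e4 : (n : ℚ) + 2 ≠ 0 := by positivity
  push_cast at q ⊢
  rw [show 2 * ((n : ℚ) + 1) - 2 * k + 1 = 2 * n - 2 * k + 3 by ring] at *
  rw [show 2 * ((n : ℚ) + 2) - 2 * k - 1 = 2 * n - 2 * k + 3 by ring,
    show 2 * (n : ℚ) - 2 * (k + 1) + 3 = 2 * n - 2 * k + 1 by ring,
    show (n : ℚ) + 1 + 1 = n + 2 by ring]
  rw [show n + 1 + 1 = n + 2 by ring]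
  generalize t (n + 2) k = u
  generalize h (n + 2) k = w
  generalize (n : ℚ) = x at *
  generalize (k : ℚ) = y at *
  obtain ⟨r0, hr0⟩ : ∃ r, r = 2 * x - 2 * y + 1 := ⟨_, rfl⟩
  obtain ⟨r1, hr1⟩ : ∃ r, r = 2 * x - 2 * y + 3 := ⟨_, rfl⟩
  obtain ⟨a, ha⟩ : ∃ r, r = x + 2 - y := ⟨_, rfl⟩
  obtain ⟨b, hb⟩ : ∃ r, r = x + 1 - y := ⟨_, rfl⟩
  rw [← hr0] at q2 ⊢
  rw [← hr1] at q ⊢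
  rw [← ha, ← hb]
  obtain ⟨p0, hp0⟩ : ∃ r, r = P x y := ⟨_, rfl⟩
  obtain ⟨p1, hp1⟩ : ∃ r, r = P x (y + 1) := ⟨_, rfl⟩
  obtain ⟨p2, hp2⟩ : ∃ r, r = Pder x y := ⟨_, rfl⟩
  obtain ⟨p3, hp3⟩ : ∃ r, r = Pder x (y + 1) := ⟨_, rfl⟩
  rw [← hp0, ← hp1, ← hp2, ← hp3]
  unfold P at hp0 hp1
  unfold Pder at hp2 hp3
  field_simp
  rw [hr0, hr1, hp0, hp1, hp2, hp3, ha, hb]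
  ring

lemma sum_ext (f : ℕ → ℚ) (n m : ℕ) (hnm : n ≤ m) (hf : ∀ k, n < k → f k = 0) :
    ∑ k ∈ range (n + 1), f k = ∑ k ∈ range (m + 1), f k := by
  apply Finset.sum_subset
  · intro x hx
    simp only [Finset.mem_range] at *
    omega
  · intro x _ hx
    simp only [Finset.mem_range] at *
    exact hf x (by omega)

lemma rec_of_cert (f G : ℕ → ℕ → ℚ) (hf : ∀ n k, n < k → f n k = 0)
    (hG0 : ∀ n, G n 0 = 0) (hG1 : ∀ n, G n (n + 3) = 0)
    (hc : ∀ n k : ℕ, k ≤ n + 2 → ((n : ℚ) + 2) ^ 2 * f (n + 2) k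
      - (32 * (n + 1) * (n + 2) + 12) * f (n + 1) k
      + 256 * (n + 1) ^ 2 * f n k = G n (k + 1) - G n k) (n : ℕ) :
    ((n : ℚ) + 2) ^ 2 * ∑ k ∈ range (n + 2 + 1), f (n + 2) k
      - (32 * (n + 1) * (n + 2) + 12) * ∑ k ∈ range (n + 1 + 1), f (n + 1) k
      + 256 * (n + 1) ^ 2 * ∑ k ∈ range (n + 1), f n k = 0 := by
  rw [sum_ext (f n) n (n + 2) (by omega) (hf n),
    sum_ext (f (n + 1)) (n + 1) (n + 2) (by omega) (hf (n + 1)),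
    Finset.mul_sum, Finset.mul_sum, Finset.mul_sum, ← Finset.sum_sub_distrib,
    ← Finset.sum_add_distrib]
  rw [Finset.sum_congr rfl (fun k hk => hc n k (by simp only [Finset.mem_range] at hk; omega)),
    Finset.sum_range_sub, hG0, hG1]
  simp

lemma th_sum (n : ℕ) : ∑ k ∈ range (n + 1), t n k * h n k = 0 := by
  have h1 := Finset.sum_range_reflect (fun k => t n k * h n k) (n + 1)
  have h2 : ∑ k ∈ range (n + 1), t n (n + 1 - 1 - k) * h n (n + 1 - 1 - k)
      = ∑ k ∈ range (n + 1), - (t n k * h n k) := by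
    apply Finset.sum_congr rfl
    intro k hk
    simp only [Finset.mem_range] at hk
    obtain ⟨d, rfl⟩ := Nat.exists_eq_add_of_le (show k ≤ n by omega)
    rw [show k + d + 1 - 1 - k = d by omega, t_add, h_add, show k + d = d + k by ring, t_add, h_add,
      Nat.choose_symm_add]
    ring
  rw [h2, Finset.sum_neg_distrib] at h1
  linarith

lemma uniq (a b : ℕ → ℚ) (h0 : a 0 = b 0) (h1 : a 1 = b 1)
    (ha : ∀ n : ℕ, ((n : ℚ) + 2) ^ 2 * a (n + 2) - (32 * (n + 1) * (n + 2) + 12) * a (n + 1)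
      + 256 * (n + 1) ^ 2 * a n = 0)
    (hb : ∀ n : ℕ, ((n : ℚ) + 2) ^ 2 * b (n + 2) - (32 * (n + 1) * (n + 2) + 12) * b (n + 1)
      + 256 * (n + 1) ^ 2 * b n = 0) (n : ℕ) : a n = b n ∧ a (n + 1) = b (n + 1) := by
  induction n with
  | zero => exact ⟨h0, h1⟩
  | succ n ih =>
    refine ⟨ih.2, ?_⟩
    have e : ((n : ℚ) + 2) ^ 2 ≠ 0 := by positivity
    have h3 := ha n
    have h4 := hb n
    rw [ih.1, ih.2] at h3
    apply mul_left_cancel₀ e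
    rw [show n + 1 + 1 = n + 2 by ring]
    linarith

lemma D_sum (n : ℕ) : ∑ k ∈ range (n + 1), D n k = -2 * ∑ k ∈ range (n + 1), t n k * (1 + k * h n k) := by
  have e : ∀ k ∈ range (n + 1), D n k = n * (t n k * h n k) + -2 * (t n k * (1 + k * h n k)) := by
    intro k _
    unfold D
    ring
  rw [Finset.sum_congr rfl e, Finset.sum_add_distrib, ← Finset.mul_sum, ← Finset.mul_sum, th_sum]
  ring

lemma main (n : ℕ) : ∑ k ∈ range (n + 1), D n k = -2 * ∑ k ∈ range (n + 1), s n k := by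
  refine (uniq (fun n => ∑ k ∈ range (n + 1), D n k) (fun n => -2 * ∑ k ∈ range (n + 1), s n k)
    ?_ ?_ ?_ ?_ n).1
  · simp [D, s, t, h]
  · simp [D, s, t, h, Finset.sum_range_succ, harmonic, Nat.choose]
    try norm_num
  · apply rec_of_cert D GT
    · intro n k hk
      simp [D, t_zero hk]
    · intro n
      simp [GT]
    · intro n
      simp [GT, t_zero (show n + 2 < n + 3 by omega)]
    · exact T_cert
  · intro n
    have := rec_of_cert s GS (fun n k hk => s_zero hk) (fun n => by simp [GS])
      (fun n => by simp [GS, s_zero (show n + 2 < n + 3 by omega)]) S_cert n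
    linear_combination -2 * this

end HB

theorem harmonic_binomial_identity_one_half (n : ℕ) :
    ((2 * n).choose n : ℚ) *
        ∑ k ∈ Finset.range (n + 1),
          (n.choose k : ℚ) * ((2 * k).choose k : ℚ) ^ 2 * ((2 * n - 2 * k).choose (n - k) : ℚ) ^ 2 *
            (1 + (k : ℚ) * (-5 * harmonic k + 5 * harmonic (n - k)
              + 4 * harmonic (2 * k) - 4 * harmonic (2 * n - 2 * k))) =
      ((2 * n).choose n : ℚ) *
        ∑ k ∈ Finset.range (n + 1),
          (4 : ℚ) ^ (n - k) * ((2 * k).choose k : ℚ) ^ 2 * ((2 * n - 2 * k).choose (n - k) : ℚ) := by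
  congr 1
  have h1 := HB.main n
  rw [HB.D_sum] at h1
  have h2 : ∑ k ∈ Finset.range (n + 1), HB.s n k = ∑ k ∈ Finset.range (n + 1),
          (4 : ℚ) ^ (n - k) * ((2 * k).choose k : ℚ) ^ 2 * ((2 * n - 2 * k).choose (n - k) : ℚ) := by
    apply Finset.sum_congr rfl
    intro k hk
    simp only [Finset.mem_range] at hk
    unfold HB.s
    rw [if_pos (by omega)]
  rw [← h2]
  have h3 := mul_left_cancel₀ (by norm_num : (-2 : ℚ) ≠ 0) h1
  exact h3
end

section
/- In ℚ, for every natural number n, Σ_{k=0}^{n} C(2k,k)³·C(2n−2k,n−k)³·(1 + 6k·(−H_k + H_{n−k} + H_{2k} − H_{2n−2k})) = Σ_{k=0}^{n} 16^{n−k}·C(2k,k)³·C(2n−2k,n−k). -/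
open Finset

namespace HBW
open PowerSeries

/-- The Euler derivation `X d/dX`. -/
noncomputable def D : Derivation ℚ ℚ⟦X⟧ ℚ⟦X⟧ := (X : ℚ⟦X⟧) • PowerSeries.derivative ℚ

lemma D_apply (f : ℚ⟦X⟧) : D f = X * PowerSeries.derivative ℚ f := rfl

lemma coeff_D (f : ℚ⟦X⟧) (n : ℕ) : coeff n (D f) = n * coeff n f := by
  rw [D_apply]
  cases n with
  | zero => simp
  | succ n =>
    rw [coeff_succ_X_mul, coeff_derivative]
    push_cast
    ring

lemma D_mul (a b : ℚ⟦X⟧) : D (a * b) = a * D b + D a * b := by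
  rw [Derivation.leibniz, smul_eq_mul, smul_eq_mul]
  ring

lemma D_cast (m : ℕ) : D (m : ℚ⟦X⟧) = 0 := Derivation.map_natCast D m

lemma D_2 : D ((2 : ℚ⟦X⟧)) = 0 := by exact_mod_cast D_cast 2
lemma D_3 : D ((3 : ℚ⟦X⟧)) = 0 := by exact_mod_cast D_cast 3
lemma D_4 : D ((4 : ℚ⟦X⟧)) = 0 := by exact_mod_cast D_cast 4
lemma D_6 : D ((6 : ℚ⟦X⟧)) = 0 := by exact_mod_cast D_cast 6
lemma D_8 : D ((8 : ℚ⟦X⟧)) = 0 := by exact_mod_cast D_cast 8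
lemma D_12 : D ((12 : ℚ⟦X⟧)) = 0 := by exact_mod_cast D_cast 12
lemma D_24 : D ((24 : ℚ⟦X⟧)) = 0 := by exact_mod_cast D_cast 24
lemma D_64 : D ((64 : ℚ⟦X⟧)) = 0 := by exact_mod_cast D_cast 64

lemma D_X : D (X : ℚ⟦X⟧) = X := by
  rw [D_apply, derivative_X, mul_one]

noncomputable def q : ℚ⟦X⟧ := 1 - 64 * X
noncomputable def u : ℚ⟦X⟧ := 8 * X * q⁻¹

lemma q_inv : q * q⁻¹ = 1 := by
  apply PowerSeries.mul_inv_cancel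
  simp [q]

lemma q_u : q * u = 8 * X := by
  rw [u]; linear_combination (8 * X) * q_inv

lemma D_q : D q = -64 * X := by
  rw [q, map_sub, D_mul, D_64, D_X, Derivation.map_one_eq_zero]; ring

lemma q_cancel {a b : ℚ⟦X⟧} (h : q * a = q * b) : a = b := by
  have : q⁻¹ * (q * a) = q⁻¹ * (q * b) := by rw [h]
  linear_combination this + (b - a) * q_inv

lemma D_u : D u = u * (1 + 8 * u) := by
  have h := congrArg D q_u
  rw [D_mul, D_mul, D_8, D_X, D_q] at h
  apply q_cancel
  linear_combination h - (1 + 8 * u) * q_u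

/-- coefficient extraction for `q * f` -/
lemma coeff_q_mul_succ (f : ℚ⟦X⟧) (n : ℕ) :
    coeff (n + 1) (q * f) = coeff (n + 1) f - 64 * coeff n f := by
  have : q * f = f - X * ((64 : ℚ) • f) := by
    rw [q, smul_eq_C_mul, map_ofNat]; ring
  rw [this, map_sub, coeff_succ_X_mul, coeff_smul, smul_eq_mul]

lemma coeff_q_mul_zero (f : ℚ⟦X⟧) : coeff 0 (q * f) = coeff 0 f := by
  simp [q]

noncomputable def c (k : ℕ) : ℚ := Nat.centralBinom k
noncomputable def h (k : ℕ) : ℚ := 6 * (harmonic (2 * k) - harmonic k)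

lemma c_succ (k : ℕ) : c (k + 1) = 2 * (2 * k + 1) / (k + 1) * c k := by
  have := Nat.succ_mul_centralBinom_succ k
  have h2 : ((k : ℚ) + 1) * c (k + 1) = 2 * (2 * k + 1) * c k := by
    unfold c; exact_mod_cast this
  have : (k : ℚ) + 1 ≠ 0 := by positivity
  field_simp
  linear_combination h2

lemma h_succ (k : ℕ) : h (k + 1) = h k + 6 * (1 / (2 * k + 1) - 1 / (2 * (k + 1))) := by
  have e : 2 * (k + 1) = 2 * k + 1 + 1 := by ring
  have h1 : (k : ℚ) + 1 ≠ 0 := by positivity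
  have h2 : 2 * (k : ℚ) + 1 ≠ 0 := by positivity
  have h3 : 2 * (k : ℚ) + 1 + 1 ≠ 0 := by positivity
  unfold h
  rw [e, harmonic_succ, harmonic_succ, harmonic_succ]
  push_cast
  field_simp
  ring

noncomputable def f : ℚ⟦X⟧ := PowerSeries.mk fun k => c k ^ 3
noncomputable def g : ℚ⟦X⟧ := PowerSeries.mk fun k => c k ^ 3 * h k
noncomputable def S : ℚ⟦X⟧ := PowerSeries.mk fun k => 16 ^ k * c k

lemma coeff_X_num (m : ℚ) (n : ℕ) (a : ℚ⟦X⟧) :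
    coeff (n + 1) (X * (C m * a)) = m * coeff n a := by
  rw [coeff_succ_X_mul, coeff_C_mul]

lemma D_S : D S = 4 * u * S := by
  apply q_cancel
  have : q * (4 * u * S) = X * (C 32 * S) := by
    rw [map_ofNat]; linear_combination (4 * S) * q_u
  rw [this]
  ext n
  cases n with
  | zero => rw [coeff_q_mul_zero, coeff_D]; simp
  | succ n =>
    rw [coeff_q_mul_succ, coeff_X_num, coeff_D, coeff_D]
    simp only [S, coeff_mk, c_succ]
    have h1 : (n : ℚ) + 1 ≠ 0 := by positivity
    push_cast
    field_simp
    ring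

lemma D3_f : D (D (D f)) = 12 * u * D (D f) + 6 * u * D f + u * f := by
  apply q_cancel
  have : q * (12 * u * D (D f) + 6 * u * D f + u * f) =
      X * (C 96 * D (D f)) + X * (C 48 * D f) + X * (C 8 * f) := by
    simp only [map_ofNat]; linear_combination (12 * D (D f) + 6 * D f + f) * q_u
  rw [this]
  ext n
  cases n with
  | zero => rw [coeff_q_mul_zero, coeff_D]; simp
  | succ n =>
    simp only [coeff_q_mul_succ, coeff_X_num, coeff_D, map_add]
    simp only [f, coeff_mk, c_succ]
    have h1 : (n : ℚ) + 1 ≠ 0 := by positivity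
    push_cast
    field_simp
    ring

lemma D3_g : D (D (D g)) = 12 * u * D (D g) + 6 * u * D g + u * g
    - 3 * D (D f) + 24 * u * D f + 6 * u * f := by
  apply q_cancel
  have : q * (12 * u * D (D g) + 6 * u * D g + u * g
    - 3 * D (D f) + 24 * u * D f + 6 * u * f) =
      X * (C 96 * D (D g)) + X * (C 48 * D g) + X * (C 8 * g)
      - q * (C 3 * D (D f)) + X * (C 192 * D f) + X * (C 48 * f) := by
    simp only [map_ofNat]
    linear_combination (12 * D (D g) + 6 * D g + g + 24 * D f + 6 * f) * q_u
  rw [this]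
  ext n
  cases n with
  | zero =>
    simp only [map_add, map_sub, coeff_q_mul_zero, coeff_C_mul, coeff_D]
    simp
  | succ n =>
    simp only [coeff_q_mul_succ, coeff_X_num, coeff_D, map_add, map_sub, coeff_C_mul]
    simp only [f, g, coeff_mk, c_succ, h_succ]
    have h1 : (n : ℚ) + 1 ≠ 0 := by positivity
    have h2 : 2 * (n : ℚ) + 1 ≠ 0 := by positivity
    push_cast
    field_simp
    ring

lemma S_inv : S * S⁻¹ = 1 := by
  apply PowerSeries.mul_inv_cancel
  rw [← coeff_zero_eq_constantCoeff_apply]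
  simp [S, c]

lemma D_P : D S⁻¹ = -4 * u * S⁻¹ := by
  have h := congrArg D S_inv
  rw [D_mul, D_S, Derivation.map_one_eq_zero] at h
  linear_combination S⁻¹ * h - (D S⁻¹ + 4 * u * S⁻¹) * S_inv

noncomputable def W : ℚ⟦X⟧ := f * f + D g * f - D f * g

lemma D3_w : D (D (D (S⁻¹ * W))) = 12 * u * D (D (S⁻¹ * W)) + 6 * u * D (S⁻¹ * W)
    + u * (S⁻¹ * W) := by
  have e1 : D (S⁻¹ * W) = S⁻¹ * (-4 * u * W + (2 * f * D f + D (D g) * f - D (D f) * g)) := by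
    rw [D_mul, D_P, W]
    simp only [map_add, map_sub, D_mul]
    ring
  have e2 : D (D (S⁻¹ * W)) = D (S⁻¹ * (-4 * u * W +
      (2 * f * D f + D (D g) * f - D (D f) * g))) := by rw [e1]
  have e3 := congrArg D e2
  rw [e3, e2, e1, W]
  simp only [D_mul, D_P, map_add, map_sub, map_neg, map_zero, D_2, D_3, D_4, D_6, D_8, D_12, D_24, D_u, D3_f, D3_g,
    Derivation.map_one_eq_zero]
  ring

lemma w_eq : S⁻¹ * W = f := by
  have key : q * D (D (D (S⁻¹ * W))) = X * (C 96 * D (D (S⁻¹ * W))) + X * (C 48 * D (S⁻¹ * W))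
      + X * (C 8 * (S⁻¹ * W)) := by
    simp only [map_ofNat]
    rw [D3_w]
    linear_combination (12 * D (D (S⁻¹ * W)) + 6 * D (S⁻¹ * W) + (S⁻¹ * W)) * q_u
  have h0 : coeff 0 (S⁻¹ * W) = 1 := by
    simp [W, S, f, g, c, h, D_apply]
  generalize S⁻¹ * W = w at key h0
  ext n
  induction n with
  | zero => rw [h0]; simp [f, c]
  | succ n ih =>
    have hk := congrArg (coeff (n + 1)) key
    simp only [coeff_q_mul_succ, coeff_X_num, coeff_D, map_add, ih] at hk
    simp only [f, coeff_mk, c_succ] at hk ⊢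
    have h1 : (n : ℚ) + 1 ≠ 0 := by positivity
    push_cast at hk
    have h3 : ((n : ℚ) + 1) ^ 3 ≠ 0 := by positivity
    apply mul_left_cancel₀ h3
    field_simp
    linear_combination hk

lemma W_eq : W = f * S := by
  linear_combination S * w_eq - W * S_inv

end HBW

theorem harmonic_binomial_identity_wronskian (n : ℕ) :
    (∑ k ∈ Finset.range (n + 1),
        ((2 * k).choose k : ℚ) ^ 3 * ((2 * n - 2 * k).choose (n - k) : ℚ) ^ 3 *
          (1 + 6 * (k : ℚ) * (-harmonic k + harmonic (n - k)
            + harmonic (2 * k) - harmonic (2 * n - 2 * k)))) =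
      ∑ k ∈ Finset.range (n + 1),
        (16 : ℚ) ^ (n - k) * ((2 * k).choose k : ℚ) ^ 3 * ((2 * n - 2 * k).choose (n - k) : ℚ) := by
  have key := congrArg (PowerSeries.coeff n) HBW.W_eq
  simp only [HBW.W, map_add, map_sub, PowerSeries.coeff_mul, HBW.coeff_D,
    Finset.Nat.sum_antidiagonal_eq_sum_range_succ_mk] at key
  rw [← Finset.sum_add_distrib, ← Finset.sum_sub_distrib] at key
  simp only [HBW.f, HBW.g, HBW.S, PowerSeries.coeff_mk, HBW.c, HBW.h,
    Nat.centralBinom_eq_two_mul_choose, Nat.mul_sub] at key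
  refine Eq.trans (Finset.sum_congr rfl fun k _ => ?_)
    (key.trans (Finset.sum_congr rfl fun k _ => ?_)) <;> ring
end

section
/- For every natural number N, Σ_{k=0}^{⌊N/2⌋} C(2(N−k),N−k)·C(3(N−k),N−k)·C(N−k,k)·C(N−2k,k) = C(2N,N) · Σ_{j=0}^{N} C(N,j)²·C(2j,j). (Equivalently, as formal power series, Σ_{n≥0} C(2n,n)·C(3n,n)·U_n(x) = Σ_{N≥0} A_N x^N where U_n(x) = Σ_{k} C(n,k)·C(n−k,k)·x^{n+k} and A_N = C(2N,N)·Σ_{j=0}^{N} C(N,j)²·C(2j,j).) -/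
open Finset

/-- Reciprocal factorial, extended by zero to negative integers. -/
noncomputable def rfac (m : ℤ) : ℚ := if m < 0 then 0 else 1 / (m.toNat.factorial : ℚ)

lemma rfac_neg {m : ℤ} (h : m < 0) : rfac m = 0 := by simp [rfac, h]

lemma rfac_nat (n : ℕ) : rfac n = 1 / (n.factorial : ℚ) := by simp [rfac]

lemma rfac_pred (m : ℤ) : rfac (m - 1) = m * rfac m := by
  rcases lt_trichotomy m 0 with h | h | h
  · rw [rfac_neg h, rfac_neg (by omega)]; simp
  · subst h; rw [rfac_neg (by omega)]; simp
  · obtain ⟨n, rfl⟩ : ∃ n : ℕ, m = (n + 1 : ℕ) := ⟨(m - 1).toNat, by omega⟩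
    have : ((n + 1 : ℕ) : ℤ) - 1 = (n : ℕ) := by push_cast; ring
    rw [this, rfac_nat, rfac_nat, Nat.factorial_succ]
    have := Nat.factorial_ne_zero n
    push_cast
    field_simp

lemma choose_rfac (n j : ℕ) :
    (n.choose j : ℚ) = n.factorial * rfac j * rfac ((n : ℤ) - j) := by
  by_cases h : j ≤ n
  · have : (n : ℤ) - j = ((n - j : ℕ) : ℤ) := by omega
    rw [this, rfac_nat, rfac_nat, Nat.cast_choose ℚ h]
    ring
  · rw [rfac_neg (m := (n : ℤ) - j) (by omega), Nat.choose_eq_zero_of_lt (by omega)]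
    simp

/-- Summand of the right-hand side. -/
noncomputable def f1 (N j : ℕ) : ℚ := (N.choose j : ℚ) ^ 2 * ((2 * j).choose j : ℚ)

noncomputable def s1 (N : ℕ) : ℚ := ∑ j ∈ range (N + 1), f1 N j

lemma f1_eq (N j : ℕ) : f1 N j =
    (N.factorial : ℚ) ^ 2 * ((2 * j).factorial : ℚ) * rfac j ^ 4 * rfac ((N : ℤ) - j) ^ 2 := by
  unfold f1
  rw [choose_rfac, choose_rfac]
  have : ((2 * j : ℕ) : ℤ) - j = j := by push_cast; ring
  rw [this]; ring

lemma s1_ext (N M : ℕ) (h : N + 1 ≤ M) : ∑ j ∈ range M, f1 N j = s1 N := by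
  unfold s1
  apply Finset.eventually_constant_sum _ h
  intro j hj
  simp [f1, Nat.choose_eq_zero_of_lt (show N < j by omega)]

noncomputable def g1 (N j : ℕ) : ℚ :=
  (N.factorial : ℚ) ^ 2 * ((j : ℚ) ^ 3 * (-4 * (N + 1) ^ 2 * (N + 2) + 3 * (N + 1) ^ 2 * j)) *
    ((2 * j).factorial : ℚ) * rfac j ^ 4 * rfac ((N : ℤ) + 2 - j) ^ 2

lemma step1 (N j : ℕ) :
    ((N : ℚ) + 2) ^ 2 * f1 (N + 2) j - (10 * (N + 1) ^ 2 + 10 * (N + 1) + 3) * f1 (N + 1) j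
      + 9 * (N + 1) ^ 2 * f1 N j = g1 N (j + 1) - g1 N j := by
  rw [f1_eq, f1_eq, f1_eq, g1, g1]
  have h1 := rfac_pred ((j : ℤ) + 1)
  have h2 := rfac_pred ((N : ℤ) + 2 - j)
  have h3 := rfac_pred ((N : ℤ) + 1 - j)
  rw [show (j : ℤ) + 1 - 1 = j by ring] at h1
  rw [show (N : ℤ) + 2 - j - 1 = N + 1 - j by ring] at h2
  rw [show (N : ℤ) + 1 - j - 1 = N - j by ring, h2] at h3
  rw [show 2 * (j + 1) = 2 * j + 1 + 1 by ring]
  simp only [Nat.factorial_succ]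
  push_cast
  rw [show (N : ℤ) + 2 - (j + 1) = N + 1 - j by ring, h3, h2, h1]
  push_cast
  ring

lemma rec1 (N : ℕ) :
    ((N : ℚ) + 2) ^ 2 * s1 (N + 2) - (10 * (N + 1) ^ 2 + 10 * (N + 1) + 3) * s1 (N + 1)
      + 9 * (N + 1) ^ 2 * s1 N = 0 := by
  rw [← s1_ext (N + 2) (N + 3) (by omega), ← s1_ext (N + 1) (N + 3) (by omega),
    ← s1_ext N (N + 3) (by omega), mul_sum, mul_sum, mul_sum, ← sum_sub_distrib,
    ← sum_add_distrib, sum_congr rfl (fun j _ => step1 N j), sum_range_sub]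
  have : rfac ((N : ℤ) + 2 - ((N + 3 : ℕ) : ℤ)) = 0 := rfac_neg (by push_cast; omega)
  rw [g1, this, g1]
  simp

/-- Summand of the left-hand side. -/
noncomputable def f2 (N k : ℕ) : ℚ :=
  ((3 * (N - k)).factorial : ℚ) * rfac k ^ 2 * rfac ((N : ℤ) - k) ^ 2 * rfac ((N : ℤ) - 3 * k)

noncomputable def s2 (N : ℕ) : ℚ := ∑ k ∈ range (N / 3 + 1), f2 N k

lemma s2_ext (N M : ℕ) (h : N / 3 + 1 ≤ M) : ∑ k ∈ range M, f2 N k = s2 N := by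
  unfold s2
  apply Finset.eventually_constant_sum _ h
  intro k hk
  rw [f2, rfac_neg (m := (N : ℤ) - 3 * k) (by omega)]
  simp

lemma f2_eq (n k : ℕ) (h : k ≤ n) :
    ((2 * n).choose n : ℚ) * ((3 * n).choose n : ℚ) * (n.choose k : ℚ) * ((n - k).choose k : ℚ) =
      f2 (n + k) k := by
  obtain ⟨m, rfl⟩ := Nat.exists_eq_add_of_le h
  rw [f2, choose_rfac, choose_rfac (3 * _), choose_rfac _ k, choose_rfac _ k]
  generalize hn : k + m = n
  have e1 : ((2 * n : ℕ) : ℤ) - n = n := by push_cast; ring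
  have e2 : ((3 * n : ℕ) : ℤ) - n = (2 * n : ℕ) := by push_cast; ring
  have e3 : (n : ℤ) - k = m := by omega
  have e4 : n - k = m := by omega
  have e5 : n + k - k = n := by omega
  have e6 : ((n + k : ℕ) : ℤ) - k = n := by push_cast; ring
  have e7 : ((n + k : ℕ) : ℤ) - 3 * k = m - k := by omega
  rw [e1, e2, e3, e4, e5, e6, e7, rfac_nat n, rfac_nat (2 * n), rfac_nat m]
  have := Nat.factorial_ne_zero n
  have := Nat.factorial_ne_zero (2 * n)
  have := Nat.factorial_ne_zero m
  field_simp

noncomputable def g2 (N k : ℕ) : ℚ :=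
  (k : ℚ) ^ 2 * (3 * N - 3 * k + 1) * (3 * N - 3 * k + 2) *
    ((-2304 - 4554 * N - 2943 * N ^ 2 - 621 * N ^ 3) + (2430 + 3159 * N + 1026 * N ^ 2) * k
      + (-648 - 405 * N) * k ^ 2) *
    ((3 * (N - k)).factorial : ℚ) * rfac k ^ 2 * rfac ((N : ℤ) - k) * rfac ((N : ℤ) + 2 - k)
    * rfac ((N : ℤ) + 2 - 3 * k)

lemma step2 (N k : ℕ) (h : k < N) :
    ((N : ℚ) + 2) ^ 3 * f2 (N + 2) k
      - 2 * (2 * N + 3) * (10 * (N + 1) ^ 2 + 10 * (N + 1) + 3) * f2 (N + 1) k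
      + 36 * (N + 1) * (2 * N + 1) * (2 * N + 3) * f2 N k = g2 N (k + 1) - g2 N k := by
  obtain ⟨m, rfl⟩ := Nat.exists_eq_add_of_lt h
  unfold f2 g2
  rw [show 3 * (k + m + 1 + 2 - k) = 3 * m + 1 + 1 + 1 + 1 + 1 + 1 + 1 + 1 + 1 by omega,
    show 3 * (k + m + 1 + 1 - k) = 3 * m + 1 + 1 + 1 + 1 + 1 + 1 by omega,
    show 3 * (k + m + 1 - k) = 3 * m + 1 + 1 + 1 by omega,
    show 3 * (k + m + 1 - (k + 1)) = 3 * m by omega]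
  have h1 := rfac_pred ((k : ℤ) + 1)
  have a2 := rfac_pred ((m : ℤ) + 3)
  have a1 := rfac_pred ((m : ℤ) + 2)
  have a0 := rfac_pred ((m : ℤ) + 1)
  have c2 := rfac_pred ((m : ℤ) + 3 - 2 * k)
  have c1 := rfac_pred ((m : ℤ) + 2 - 2 * k)
  have c0 := rfac_pred ((m : ℤ) + 1 - 2 * k)
  rw [show (k : ℤ) + 1 - 1 = k by ring] at h1
  rw [show (m : ℤ) + 3 - 1 = m + 2 by ring] at a2
  rw [show (m : ℤ) + 2 - 1 = m + 1 by ring, a2] at a1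
  rw [show (m : ℤ) + 1 - 1 = m by ring, a1] at a0
  rw [show (m : ℤ) + 3 - 2 * k - 1 = m + 2 - 2 * k by ring] at c2
  rw [show (m : ℤ) + 2 - 2 * k - 1 = m + 1 - 2 * k by ring, c2] at c1
  rw [show (m : ℤ) + 1 - 2 * k - 1 = m - 2 * k by ring, c1] at c0
  simp only [Nat.factorial_succ]
  push_cast
  rw [show (k : ℤ) + m + 1 + 2 - k = m + 3 by ring,
    show (k : ℤ) + m + 1 + 1 - k = m + 2 by ring,
    show (k : ℤ) + m + 1 - k = m + 1 by ring,
    show (k : ℤ) + m + 1 + 2 - (k + 1) = m + 2 by ring,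
    show (k : ℤ) + m + 1 - (k + 1) = m by ring,
    show (k : ℤ) + m + 1 + 2 - 3 * (k + 1) = m - 2 * k by ring,
    show (k : ℤ) + m + 1 + 2 - 3 * k = m + 3 - 2 * k by ring,
    show (k : ℤ) + m + 1 + 1 - 3 * k = m + 2 - 2 * k by ring,
    show (k : ℤ) + m + 1 - 3 * k = m + 1 - 2 * k by ring,
    h1, a0, a1, a2, c0, c1, c2]
  push_cast
  ring

lemma rec2 (N : ℕ) (hN : 2 ≤ N) :
    ((N : ℚ) + 2) ^ 3 * s2 (N + 2)
      - 2 * (2 * N + 3) * (10 * (N + 1) ^ 2 + 10 * (N + 1) + 3) * s2 (N + 1)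
      + 36 * (N + 1) * (2 * N + 1) * (2 * N + 3) * s2 N = 0 := by
  rw [← s2_ext (N + 2) N (by omega), ← s2_ext (N + 1) N (by omega),
    ← s2_ext N N (by omega), mul_sum, mul_sum, mul_sum, ← sum_sub_distrib,
    ← sum_add_distrib, sum_congr rfl (fun k hk => step2 N k (mem_range.mp hk)), sum_range_sub]
  by_cases h : N = 2
  · subst h
    have : g2 2 2 = 0 := by
      rw [g2, rfac_neg (m := ((2 : ℕ) : ℤ) + 2 - 3 * (2 : ℕ)) (by norm_num)]; simp
    rw [this]; simp [g2]
  · have : rfac ((N : ℤ) + 2 - 3 * N) = 0 := rfac_neg (by omega)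
    simp [g2, this]

lemma lhs_eq (N : ℕ) :
    ((∑ k ∈ Finset.range (N / 2 + 1),
        (2 * (N - k)).choose (N - k) * (3 * (N - k)).choose (N - k) *
          (N - k).choose k * (N - 2 * k).choose k : ℕ) : ℚ) = s2 N := by
  rw [← s2_ext N (N / 2 + 1) (by omega)]
  push_cast
  apply sum_congr rfl
  intro k hk
  have hk := mem_range.mp hk
  have := f2_eq (N - k) k (by omega)
  rw [show N - k + k = N by omega, show N - k - k = N - 2 * k by omega] at this
  exact this

lemma rhs_eq (N : ℕ) :
    (((2 * N).choose N * ∑ j ∈ Finset.range (N + 1), (N.choose j) ^ 2 * (2 * j).choose j : ℕ) : ℚ)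
      = (N.centralBinom : ℚ) * s1 N := by
  simp [s1, f1, Nat.centralBinom]

lemma main_rat (N : ℕ) : s2 N = (N.centralBinom : ℚ) * s1 N := by
  induction N using Nat.strong_induction_on with
  | _ N ih =>
    by_cases h : N < 4
    · rw [← lhs_eq, ← rhs_eq]
      congr 1
      interval_cases N <;> decide
    · obtain ⟨n, rfl⟩ : ∃ n, N = n + 2 := ⟨N - 2, by omega⟩
      have r1 := rec1 n
      have r2 := rec2 n (by omega)
      rw [ih n (by omega), ih (n + 1) (by omega)] at r2
      have b1 : ((n : ℚ) + 1) * ((n + 1).centralBinom : ℚ) =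
          2 * (2 * n + 1) * (n.centralBinom : ℚ) := by
        exact_mod_cast Nat.succ_mul_centralBinom_succ n
      have b2 : ((n : ℚ) + 2) * ((n + 2).centralBinom : ℚ) =
          2 * (2 * n + 3) * ((n + 1).centralBinom : ℚ) := by
        have := Nat.succ_mul_centralBinom_succ (n + 1)
        have : (n + 2) * (n + 2).centralBinom = 2 * (2 * n + 3) * (n + 1).centralBinom := this
        exact_mod_cast this
      have hz : ((n : ℚ) + 2) ^ 3 ≠ 0 := by positivity
      apply mul_left_cancel₀ hz
      linear_combination r2 - 2 * (2 * n + 3) * ((n + 1).centralBinom : ℚ) * r1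
        - ((n : ℚ) + 2) ^ 2 * s1 (n + 2) * b2 + 18 * (n + 1) * (2 * n + 3) * s1 n * b1

theorem sum_U_coeff_eq_central_binomial_mul_sum (N : ℕ) :
    (∑ k ∈ Finset.range (N / 2 + 1),
        (2 * (N - k)).choose (N - k) * (3 * (N - k)).choose (N - k) *
          (N - k).choose k * (N - 2 * k).choose k) =
      (2 * N).choose N * ∑ j ∈ Finset.range (N + 1), (N.choose j) ^ 2 * (2 * j).choose j := by
  have h := main_rat N
  rw [← lhs_eq, ← rhs_eq] at h
  exact_mod_cast h
end
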